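/- (Separation lemma in high dimensions) Let d ≥ 5. There exists a constant c₁ > 0, depending only on d, such that for all n ≥ 1, P( Z_n ≥ n/2 | F_n ) ≥ c₁, where S and S' are independent simple random walks on Z^d started at 0, T_n and T'_n are their respective first exit times from the cube Q_n, F_n is the event that S[1,T_n] and S'[1,T'_n] are disjoint, and Z_n = max( dist(S(T_n), S'[1,T'_n]), dist(S'(T'_n), S[0,T_n]) ). -/

import Mathlib

open MeasureTheory
open scoped ENNReal Classical

namespace USFPaper

/-- Vertices of the nearest-neighbour integer lattice `ℤ^d`. -/
abbrev V (d : ℕ) := Fin d → ℤ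

variable {d : ℕ}

/-- Nearest-neighbour adjacency in `ℤ^d`. -/
def adj (x y : V d) : Prop := (∑ i, |x i - y i|) = 1

/-- The cube `Q(x,r) = { y : ‖x - y‖_∞ ≤ r }`. -/
def cube (x : V d) (r : ℕ) : Set (V d) := { y | ∀ i, |y i - x i| ≤ (r : ℤ) }

/-- Inner boundary `∂ᵢA` of a set `A`. -/
def innerBdry (A : Set (V d)) : Set (V d) := { x | x ∈ A ∧ ∃ y, adj x y ∧ y ∉ A }

/-- Euclidean distance on `ℤ^d`. -/
noncomputable def eudist (x y : V d) : ℝ := Real.sqrt (∑ i, ((x i : ℝ) - (y i : ℝ)) ^ 2)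

/-- The `k`-th coordinate unit vector. -/
def unitVec (k : ℕ) : V d := fun i => if (i : ℕ) = k then 1 else 0

/-- `μ` is the law of simple random walk on `ℤ^d` started at `x`, as a probability
measure on path space: every nearest-neighbour cylinder of length `n` starting at `x`
has probability `(2d)⁻ⁿ`. -/
def IsSRWLaw (μ : Measure (ℕ → V d)) (x : V d) : Prop :=
  IsProbabilityMeasure μ ∧
  ∀ (n : ℕ) (γ : ℕ → V d), γ 0 = x → (∀ i < n, adj (γ i) (γ (i + 1))) →
    μ { ω | ∀ i ≤ n, ω i = γ i } = (2 * (d : ℝ≥0∞))⁻¹ ^ n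

/-- First exit time `τ_A` from `A`, valued in `ℕ∞` (`⊤` if the path never leaves `A`). -/
noncomputable def exitTimeE (A : Set (V d)) (ω : ℕ → V d) : ENat :=
  if h : ∃ j, ω j ∉ A then (Nat.find h : ENat) else ⊤

/-- First hitting time `T_A` of `A`, valued in `ℕ∞`. -/
noncomputable def hitTimeE (A : Set (V d)) (ω : ℕ → V d) : ENat :=
  if h : ∃ j, ω j ∈ A then (Nat.find h : ENat) else ⊤

/-- First positive hitting time `T⁺_A` of `A`, valued in `ℕ∞`. -/
noncomputable def hitTimePosE (A : Set (V d)) (ω : ℕ → V d) : ENat :=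
  if h : ∃ j, 1 ≤ j ∧ ω j ∈ A then (Nat.find h : ENat) else ⊤

/-- First exit time from `A` as a natural number (junk value `0` if the path never exits). -/
noncomputable def exitTime (A : Set (V d)) (ω : ℕ → V d) : ℕ := (exitTimeE A ω).toNat

/-- Index of the first hit of `A` (junk value `0` if `A` is never hit). -/
noncomputable def hitIdx (A : Set (V d)) (γ : ℕ → V d) : ℕ := (hitTimeE A γ).toNat

/-- First index `≥ t` at which the path lies in `A` (junk value `t`). -/
noncomputable def hitIdxFrom (A : Set (V d)) (t : ℕ) (γ : ℕ → V d) : ℕ :=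
  if h : ∃ j, t ≤ j ∧ γ j ∈ A then Nat.find h else t

/-- The path frozen at its first exit from `D`. -/
noncomputable def stopAt (D : Set (V d)) (ω : ℕ → V d) : ℕ → V d :=
  fun j => if (j : ENat) ≤ exitTimeE D ω then ω j else ω (exitTime D ω)

/-- Time of the last visit of the path to the point `ω t`, at or after time `t`
(junk value if there are infinitely many such visits). -/
noncomputable def lastVisit (ω : ℕ → V d) (t : ℕ) : ℕ := sSup { j | t ≤ j ∧ ω j = ω t }

/-- The times of the chronological loop erasure (last-exit decomposition). -/
noncomputable def leTime (ω : ℕ → V d) : ℕ → ℕ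
  | 0 => lastVisit ω 0
  | k + 1 => lastVisit ω (leTime ω k + 1)

/-- Chronological loop erasure of an (infinite, transient) path. -/
noncomputable def infLoopErase (ω : ℕ → V d) : ℕ → V d := fun k => ω (leTime ω k)

/-- The loop erasure `L` of the walk stopped at its first exit from `D`. -/
noncomputable def lerw (D : Set (V d)) (ω : ℕ → V d) : ℕ → V d := infLoopErase (stopAt D ω)

/-- The event `T_A > τ_D`: the walk does not visit `A` at any time up to (and
including) its first exit from `D`; if it never exits `D`, it never visits `A`. -/
def avoidBeforeExit (D A : Set (V d)) (ω : ℕ → V d) : Prop :=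
  ∀ j : ℕ, (j : ENat) ≤ exitTimeE D ω → ω j ∉ A

/-- The event `T⁺_A > τ_D` (visits of `A` at positive times only). -/
def avoidBeforeExitPos (D A : Set (V d)) (ω : ℕ → V d) : Prop :=
  ∀ j : ℕ, 1 ≤ j → (j : ENat) ≤ exitTimeE D ω → ω j ∉ A

/-- The right-hand face (in the first coordinate direction) of the cube `Q(x₀,m)`. -/
def rightFace (x₀ : V d) (m : ℕ) : Set (V d) :=
  { y | y ∈ cube x₀ m ∧ ∀ i : Fin d, (i : ℕ) = 0 → y i = x₀ i + (m : ℤ) }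


/-- The set of sites visited by the path during the time interval `[a,b]`. -/
def rangeSet (a b : ℕ) (ω : ℕ → V d) : Set (V d) := { v | ∃ j, a ≤ j ∧ j ≤ b ∧ ω j = v }

/-- Euclidean distance from a point to a set of lattice points. -/
noncomputable def eudistSet (x : V d) (A : Set (V d)) : ℝ := sInf (eudist x '' A)

/-! Condition both walks to follow opposite rays for their first `k` steps, an event of probability
`(2d)⁻²ᵏ`. They are then `2k` apart, so they can meet at times `i` and `j` only if one of them has
made at least `max i j / 3` steps since; by the heat kernel bound this has probability of order at
most `(i j)^(-d/4)`, which is summable because `d ≥ 5`. Hence, for a suitable constant `k`, the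
conditioned walks never meet with probability at least `7/8`.

The first walk leaves `Q_n` through the face in some direction `e`. If `n` is large compared to
`k`, the second walk, independently and whatever `e` is, leaves `Q_n` without getting above height
`n / 2` in the direction `e` with probability at least `1/4`, by the gambler's ruin estimate; the
end point of the first walk is then at distance at least `n / 2` from the second one. Both events
occur together with conditional probability at least `1/8`. For the remaining, bounded, values of
`n` the walks may follow opposite rays until they leave `Q_n`. -/

open ProbabilityTheory

/-! ### Directions, rays and heights -/

/-- The `2d` unit vectors of `ℤ^d`, indexed by an axis and a sign. -/
def step (e : Fin d × ℤˣ) : V d := Pi.single e.1 (e.2 : ℤ)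

/-- The signed coordinate of `v` in the direction `e`, i.e. the inner product of `v`
and `step e`. -/
def height (e : Fin d × ℤˣ) (v : V d) : ℤ := e.2 * v e.1

/-- The straight path that starts at `x` and repeats the step `e`. -/
def ray (x : V d) (e : Fin d × ℤˣ) (i : ℕ) : V d := x + i • step e

lemma step_injective : Function.Injective (step : Fin d × ℤˣ → V d) := by
  rintro ⟨i, u⟩ ⟨j, w⟩ h
  obtain rfl : i = j := by
    by_contra hij
    have := congrFun h i
    simp [step, Pi.single_eq_of_ne hij] at this
  simpa [step, Units.ext_iff] using h

lemma card_directions : Fintype.card (Fin d × ℤˣ) = 2 * d := by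
  simp [mul_comm]

lemma adj_add_step (x : V d) (e : Fin d × ℤˣ) : adj x (x + step e) := by
  rw [adj, Finset.sum_eq_single e.1]
  · rcases Int.units_eq_one_or e.2 with h | h <;> simp [step, h]
  · intro i _ hi
    simp [step, Pi.single_eq_of_ne hi]
  · simp

lemma adj_ray (x : V d) (e : Fin d × ℤˣ) (i : ℕ) : adj (ray x e i) (ray x e (i + 1)) := by
  simpa only [ray, succ_nsmul, add_assoc] using adj_add_step (ray x e i) e

@[simp] lemma ray_zero (x : V d) (e : Fin d × ℤˣ) : ray x e 0 = x := by simp [ray]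

@[simp] lemma ray_one (x : V d) (e : Fin d × ℤˣ) : ray x e 1 = x + step e := by simp [ray]

lemma height_add (e : Fin d × ℤˣ) (v w : V d) : height e (v + w) = height e v + height e w := by
  simp [height, mul_add]

lemma height_ray (e' : Fin d × ℤˣ) (x : V d) (e : Fin d × ℤˣ) (i : ℕ) :
    height e' (ray x e i) = height e' x + i * height e' (step e) := by
  simp only [ray, height, Pi.add_apply, Pi.smul_apply]
  ring

@[simp] lemma height_zero (e : Fin d × ℤˣ) : height e (0 : V d) = 0 := by simp [height]

lemma abs_height_sub (e : Fin d × ℤˣ) (v w : V d) :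
    |height e v - height e w| = |v e.1 - w e.1| := by
  rw [height, height, ← mul_sub, abs_mul, Int.isUnit_iff_abs_eq.mp e.2.isUnit, one_mul]

lemma abs_height_sub_le_of_adj (e : Fin d × ℤˣ) {v w : V d} (h : adj v w) :
    |height e v - height e w| ≤ 1 := by
  rw [abs_height_sub, ← h]
  exact Finset.single_le_sum (f := fun i => |v i - w i|) (fun _ _ => abs_nonneg _)
    (Finset.mem_univ e.1)

lemma height_step_self (e : Fin d × ℤˣ) : height e (step e) = 1 := by
  simp [height, step, ← Units.val_mul]

lemma abs_height_step_le (e e' : Fin d × ℤˣ) : |height e (step e')| ≤ 1 := by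
  simpa [abs_sub_comm] using abs_height_sub_le_of_adj e (adj_add_step 0 e')

lemma sum_height_step (e : Fin d × ℤˣ) : ∑ e', height e (step e') = 0 := by
  simp [Fintype.sum_prod_type, height, step, Pi.single_apply]

/-! ### The Markov property -/

/-- The event that a path agrees with `γ` up to time `k`. -/
def pathCylinder (k : ℕ) (γ : ℕ → V d) : Set (ℕ → V d) := {ω | ∀ i ≤ k, ω i = γ i}

/-- The path from time `k` on. -/
def shift (k : ℕ) (ω : ℕ → V d) : ℕ → V d := fun i => ω (i + k)

lemma measurableSet_pathCylinder (k : ℕ) (γ : ℕ → V d) : MeasurableSet (pathCylinder k γ) := by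
  simp only [pathCylinder, Set.ofPred_forall]
  exact .iInter fun i => .iInter fun _ => measurableSet_eq_fun (measurable_pi_apply i)
    measurable_const

lemma measurable_shift (k : ℕ) : Measurable (shift k : (ℕ → V d) → ℕ → V d) :=
  measurable_pi_lambda _ fun _ => measurable_pi_apply _

lemma stepProb_ne_zero : (2 * (d : ℝ≥0∞))⁻¹ ≠ 0 := by
  simp [ENNReal.mul_eq_top]

lemma stepProb_ne_top (hd : 0 < d) : (2 * (d : ℝ≥0∞))⁻¹ ≠ ∞ := by
  simp [hd.ne']

lemma stepProb_mul_two_mul (hd : 0 < d) : (2 * (d : ℝ≥0∞))⁻¹ * (2 * d) = 1 :=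
  ENNReal.inv_mul_cancel (by simp [hd.ne']) (by simp [ENNReal.mul_eq_top])

lemma pathCylinder_inter_shift_preimage {k n : ℕ} {γ γ' : ℕ → V d} (h : γ' 0 = γ k) :
    pathCylinder k γ ∩ shift k ⁻¹' pathCylinder n γ' =
      pathCylinder (n + k) fun i => if i ≤ k then γ i else γ' (i - k) := by
  ext ω
  simp only [pathCylinder, shift, Set.mem_inter_iff, Set.mem_preimage, Set.mem_ofPred_eq]
  refine ⟨fun ⟨hγ, hγ'⟩ i hi => ?_, fun hω => ⟨fun i hi => ?_, fun i hi => ?_⟩⟩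
  · split_ifs with hik
    · exact hγ i hik
    · simpa [Nat.sub_add_cancel (not_le.mp hik).le] using hγ' (i - k) (by lia)
  · simpa [hi] using hω i (by lia)
  · rcases i.eq_zero_or_pos with rfl | hi0
    · simpa [h] using hω k (by lia)
    · simpa [hi0.ne'] using hω (i + k) (by lia)

variable {μ : Measure (ℕ → V d)} {x : V d}

lemma IsSRWLaw.measure_pathCylinder (h : IsSRWLaw μ x) {k : ℕ} {γ : ℕ → V d} (h0 : γ 0 = x)
    (hγ : ∀ i < k, adj (γ i) (γ (i + 1))) :
    μ (pathCylinder k γ) = (2 * (d : ℝ≥0∞))⁻¹ ^ k :=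
  h.2 k γ h0 hγ

lemma IsSRWLaw.map_shift_cond_pathCylinder (hd : 0 < d) (h : IsSRWLaw μ x) {k : ℕ}
    {γ : ℕ → V d} (h0 : γ 0 = x) (hγ : ∀ i < k, adj (γ i) (γ (i + 1))) :
    IsSRWLaw (μ[|pathCylinder k γ].map (shift k)) (γ k) := by
  have := h.1
  have hmass := h.measure_pathCylinder h0 hγ
  have := cond_isProbabilityMeasure (μ := μ) (s := pathCylinder k γ)
    (hmass ▸ pow_ne_zero k stepProb_ne_zero)
  refine ⟨Measure.isProbabilityMeasure_map (measurable_shift k).aemeasurable,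
    fun n γ' h0' hγ' => ?_⟩
  change μ[|pathCylinder k γ].map (shift k) (pathCylinder n γ') = _
  rw [Measure.map_apply (measurable_shift k) (measurableSet_pathCylinder n γ'),
    cond_apply (measurableSet_pathCylinder k γ), pathCylinder_inter_shift_preimage h0', hmass,
    h.measure_pathCylinder (by simp [h0]), pow_add, mul_left_comm,
    ENNReal.inv_mul_cancel (pow_ne_zero k stepProb_ne_zero)
      (ENNReal.pow_ne_top (stepProb_ne_top hd)), mul_one]
  intro i hi
  rcases lt_trichotomy i k with hik | rfl | hik
  · simpa [hik.le, Nat.succ_le_of_lt hik] using hγ i hik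
  · simpa [← h0'] using hγ' 0 (by lia)
  · simpa [hik, Nat.sub_add_comm hik.le, not_le.mpr hik, not_le.mpr (hik.trans i.lt_succ_self)]
      using hγ' (i - k) (by lia)

/-- The law `μ` conditioned to follow, for its first `k` steps, the ray from `x` in direction
`e`. -/
noncomputable def rayLaw (μ : Measure (ℕ → V d)) (k : ℕ) (x : V d) (e : Fin d × ℤˣ) :
    Measure (ℕ → V d) :=
  μ[|pathCylinder k (ray x e)]

/-- The law under `rayLaw μ k x e` of the path after the ray. -/
noncomputable def afterRay (μ : Measure (ℕ → V d)) (k : ℕ) (x : V d) (e : Fin d × ℤˣ) :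
    Measure (ℕ → V d) :=
  (rayLaw μ k x e).map (shift k)

lemma IsSRWLaw.measure_ray (h : IsSRWLaw μ x) (k : ℕ) (e : Fin d × ℤˣ) :
    μ (pathCylinder k (ray x e)) = (2 * (d : ℝ≥0∞))⁻¹ ^ k :=
  h.measure_pathCylinder (ray_zero x e) fun _ _ => adj_ray _ _ _

lemma IsSRWLaw.isProbabilityMeasure_rayLaw (h : IsSRWLaw μ x) (k : ℕ) (e : Fin d × ℤˣ) :
    IsProbabilityMeasure (rayLaw μ k x e) :=
  have := h.1
  cond_isProbabilityMeasure (h.measure_ray k e ▸ pow_ne_zero k stepProb_ne_zero)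

lemma IsSRWLaw.isSRWLaw_afterRay (hd : 0 < d) (h : IsSRWLaw μ x) (k : ℕ) (e : Fin d × ℤˣ) :
    IsSRWLaw (afterRay μ k x e) (ray x e k) :=
  h.map_shift_cond_pathCylinder hd (ray_zero x e) fun _ _ => adj_ray _ _ _

lemma pairwise_disjoint_first_step (x : V d) :
    Pairwise (Function.onFun Disjoint fun e => pathCylinder 1 (ray x e)) := by
  refine fun e e' hee' => Set.disjoint_left.mpr fun ω hω hω' => hee' (step_injective ?_)
  simpa [hω 1 le_rfl] using hω' 1 le_rfl

lemma IsSRWLaw.ae_first_step (hd : 0 < d) (h : IsSRWLaw μ x) :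
    ∀ᵐ ω ∂μ, ω ∈ ⋃ e, pathCylinder 1 (ray x e) := by
  have := h.1
  change _ ∈ ae μ
  rw [Set.ofPred_mem_eq, mem_ae_iff_prob_eq_one (.iUnion fun _ => measurableSet_pathCylinder _ _),
    measure_iUnion (pairwise_disjoint_first_step x) fun _ => measurableSet_pathCylinder _ _]
  simp only [h.measure_ray, pow_one, tsum_fintype, Finset.sum_const, Finset.card_univ,
    card_directions, nsmul_eq_mul]
  simpa [mul_comm] using stepProb_mul_two_mul hd

lemma IsSRWLaw.measure_shift_preimage (hd : 0 < d) (h : IsSRWLaw μ x) {E : Set (ℕ → V d)}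
    (hE : MeasurableSet E) :
    μ (shift 1 ⁻¹' E) = (2 * (d : ℝ≥0∞))⁻¹ * ∑ e, afterRay μ 1 x e E := by
  have := h.1
  have hE' := measurable_shift 1 hE
  have hcyl (e : Fin d × ℤˣ) : μ (pathCylinder 1 (ray x e) ∩ shift 1 ⁻¹' E) =
      (2 * (d : ℝ≥0∞))⁻¹ * afterRay μ 1 x e E := by
    rw [← cond_mul_eq_inter (measurableSet_pathCylinder _ _), h.measure_ray, pow_one, mul_comm,
      afterRay, rayLaw, Measure.map_apply (measurable_shift 1) hE]
  calc μ (shift 1 ⁻¹' E) = μ (⋃ e, pathCylinder 1 (ray x e) ∩ shift 1 ⁻¹' E) := by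
        rw [← Set.iUnion_inter]
        exact (Measure.measure_inter_eq_of_ae (h.ae_first_step hd)).symm
    _ = ∑ e, μ (pathCylinder 1 (ray x e) ∩ shift 1 ⁻¹' E) := by
        rw [measure_iUnion _ fun e => (measurableSet_pathCylinder _ _).inter hE', tsum_fintype]
        exact fun e e' hee' => (pairwise_disjoint_first_step x hee').mono Set.inter_subset_left
          Set.inter_subset_left
    _ = (2 * (d : ℝ≥0∞))⁻¹ * ∑ e, afterRay μ 1 x e E := by simp only [hcyl, Finset.mul_sum]

lemma IsSRWLaw.ae_apply_zero (hd : 0 < d) (h : IsSRWLaw μ x) : ∀ᵐ ω ∂μ, ω 0 = x := by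
  filter_upwards [h.ae_first_step hd] with ω hω
  obtain ⟨e, he⟩ := Set.mem_iUnion.mp hω
  simpa using he 0 zero_le_one

lemma IsSRWLaw.ae_adj (hd : 0 < d) (h : IsSRWLaw μ x) :
    ∀ᵐ ω ∂μ, ∀ k, adj (ω k) (ω (k + 1)) := by
  refine ae_all_iff.mpr fun k => ?_
  induction k generalizing μ x with
  | zero =>
    filter_upwards [h.ae_first_step hd] with ω hω
    obtain ⟨e, he⟩ := Set.mem_iUnion.mp hω
    rw [he 0 zero_le_one, he 1 le_rfl]
    exact adj_ray x e 0
  | succ k ih =>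
    have hE : MeasurableSet {ω : ℕ → V d | ¬ adj (ω k) (ω (k + 1))} :=
      (measurableSet_eq_fun (by fun_prop) measurable_const).compl
    have hnull := h.measure_shift_preimage hd hE
    simp only [fun e => ae_iff.mp (ih (h.isSRWLaw_afterRay hd 1 e)), Finset.sum_const_zero,
      mul_zero] at hnull
    exact hnull

/-! ### The maximal inequality for superharmonic functions -/

/-- The event that a path visits `H` before time `N`, having stayed in `D` before. -/
def hitWithin (N : ℕ) (D H : Set (V d)) : Set (ℕ → V d) :=
  {ω | ∃ j < N, ω j ∈ H ∧ ∀ i < j, ω i ∈ D}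

lemma measurableSet_apply_mem (j : ℕ) (A : Set (V d)) : MeasurableSet {ω : ℕ → V d | ω j ∈ A} :=
  measurable_pi_apply j .of_discrete

lemma measurableSet_hitWithin (N : ℕ) (D H : Set (V d)) : MeasurableSet (hitWithin N D H) := by
  simp only [hitWithin, Set.ofPred_exists, Set.ofPred_and, Set.ofPred_forall]
  exact .iUnion fun j => .inter (.const _) <| .inter (measurableSet_apply_mem j H) <|
    .iInter fun i => .iInter fun _ => measurableSet_apply_mem i D

lemma hitWithin_succ {N : ℕ} {D H : Set (V d)} {ω : ℕ → V d} (h : ω ∈ hitWithin (N + 1) D H) :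
    ω 0 ∈ H ∨ ω 0 ∈ D ∧ shift 1 ω ∈ hitWithin N D H := by
  obtain ⟨_ | j, hjN, hjH, hD⟩ := h
  · exact .inl hjH
  · exact .inr ⟨hD 0 j.succ_pos, j, by lia, hjH, fun i hi => hD (i + 1) (by lia)⟩

/-- The expected value of `f` one step after `v`. -/
noncomputable def stepMean (f : V d → ℝ≥0∞) (v : V d) : ℝ≥0∞ :=
  (2 * (d : ℝ≥0∞))⁻¹ * ∑ e, f (v + step e)

lemma IsSRWLaw.mul_measure_hitWithin_le (hd : 0 < d) {f : V d → ℝ≥0∞} {c : ℝ≥0∞}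
    {D H : Set (V d)} (hH : ∀ v ∈ H, c ≤ f v) (hD : ∀ v ∈ D, stepMean f v ≤ f v) (N : ℕ)
    (h : IsSRWLaw μ x) : c * μ (hitWithin N D H) ≤ f x := by
  have := h.1
  induction N generalizing μ x with
  | zero => simp [hitWithin]
  | succ N ih =>
    by_cases hxH : x ∈ H
    · exact (mul_le_of_le_one_right' prob_le_one).trans (hH x hxH)
    have hsucc : ∀ᵐ ω ∂μ, ω ∈ hitWithin (N + 1) D H → x ∈ D ∧ shift 1 ω ∈ hitWithin N D H := by
      filter_upwards [h.ae_apply_zero hd] with ω hω hhit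
      simpa [hω, hxH] using hitWithin_succ hhit
    by_cases hxD : x ∈ D
    · calc c * μ (hitWithin (N + 1) D H) ≤ c * μ (shift 1 ⁻¹' hitWithin N D H) := by
            exact mul_le_mul_right (measure_mono_ae (hsucc.mono fun ω hω hhit => (hω hhit).2)) c
        _ = (2 * (d : ℝ≥0∞))⁻¹ * ∑ e, c * afterRay μ 1 x e (hitWithin N D H) := by
            rw [h.measure_shift_preimage hd (measurableSet_hitWithin N D H), mul_left_comm,
              Finset.mul_sum]
        _ ≤ stepMean f x := by
            unfold stepMean
            gcongr with e
            have he := h.isSRWLaw_afterRay hd 1 e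
            simpa using ih he he.1
        _ ≤ f x := hD x hxD
    · have hnull : μ (hitWithin (N + 1) D H) = 0 :=
        measure_eq_zero_iff_ae_notMem.mpr (hsucc.mono fun ω hω hhit => hxD (hω hhit).1)
      simp [hnull]

/-- The event that a path visits `H`, having stayed in `D` before. -/
def hitEvent (D H : Set (V d)) : Set (ℕ → V d) := {ω | ∃ j, ω j ∈ H ∧ ∀ i < j, ω i ∈ D}

lemma iUnion_hitWithin (D H : Set (V d)) : ⋃ N, hitWithin N D H = hitEvent D H := by
  ext ω
  simp only [hitWithin, hitEvent, Set.mem_iUnion, Set.mem_ofPred_eq]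
  exact ⟨fun ⟨_, j, _, hj⟩ => ⟨j, hj⟩, fun ⟨j, hj⟩ => ⟨j + 1, j, j.lt_succ_self, hj⟩⟩

lemma hitWithin_mono (D H : Set (V d)) : Monotone fun N => hitWithin N D H :=
  fun _ _ hNM _ ⟨j, hj, hjD⟩ => ⟨j, hj.trans_le hNM, hjD⟩

lemma IsSRWLaw.mul_measure_hitEvent_le (hd : 0 < d) (h : IsSRWLaw μ x) {f : V d → ℝ≥0∞}
    {c : ℝ≥0∞} {D H : Set (V d)} (hH : ∀ v ∈ H, c ≤ f v) (hD : ∀ v ∈ D, stepMean f v ≤ f v) :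
    c * μ (hitEvent D H) ≤ f x := by
  rw [← iUnion_hitWithin, (hitWithin_mono D H).measure_iUnion, ENNReal.mul_iSup]
  exact iSup_le fun N => h.mul_measure_hitWithin_le hd hH hD N

/-- The affine function of `height e` that vanishes just below height `-a`, cut off at `0`. -/
noncomputable def heightAbove (e : Fin d × ℤˣ) (a : ℕ) (v : V d) : ℝ≥0∞ :=
  ((height e v + (a + 1)).toNat : ℝ≥0∞)

lemma stepMean_heightAbove (hd : 0 < d) (e : Fin d × ℤˣ) {a : ℕ} {v : V d}
    (hv : -(a : ℤ) ≤ height e v) : stepMean (heightAbove e a) v = heightAbove e a v := by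
  have hsum : ∑ e', (height e (v + step e') + (a + 1)).toNat =
      2 * d * (height e v + (a + 1)).toNat := by
    have hnonneg (e' : Fin d × ℤˣ) : 0 ≤ height e v + height e (step e') + (a + 1) := by
      linarith [(abs_le.mp (abs_height_step_le e e')).1]
    zify
    simp only [height_add, Int.toNat_of_nonneg (hnonneg _), Finset.sum_add_distrib,
      sum_height_step, Finset.sum_const, Finset.card_univ, card_directions, nsmul_eq_mul]
    rw [Int.toNat_of_nonneg (by linarith)]
    push_cast
    ring
  simp only [stepMean, heightAbove]
  rw [← Nat.cast_sum, hsum, Nat.cast_mul, ← mul_assoc]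
  push_cast
  rw [stepProb_mul_two_mul hd, one_mul]

lemma IsSRWLaw.gamblers_ruin (hd : 0 < d) (h : IsSRWLaw μ x) (e : Fin d × ℤˣ) (a b : ℕ) :
    (a + b + 1) * μ (hitEvent {v | -(a : ℤ) ≤ height e v} {v | (b : ℤ) ≤ height e v}) ≤
      heightAbove e a x := by
  refine h.mul_measure_hitEvent_le hd (fun v hv => ?_) fun v hv => (stepMean_heightAbove hd e hv).le
  simp only [Set.mem_ofPred_eq] at hv
  rw [heightAbove]
  exact_mod_cast (show a + b + 1 ≤ (height e v + (a + 1)).toNat by lia)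

/-! ### The heat kernel bound -/

/-- The characteristic function of one step of the walk. -/
noncomputable def stepCharFun (t : UnitAddTorus (Fin d)) : ℂ :=
  (2 * (d : ℂ))⁻¹ * ∑ e : Fin d × ℤˣ, UnitAddTorus.mFourier (step e) t

lemma integral_fourier (n : ℤ) : ∫ t : UnitAddCircle, fourier n t = if n = 0 then 1 else 0 := by
  split_ifs with hn
  · simp [hn, measureReal_def]
  · exact integral_eq_zero_of_add_right_eq_neg (fourier_add_half_inv_index hn zero_lt_one)

lemma integral_mFourier (n : V d) :
    ∫ t, UnitAddTorus.mFourier n t = if n = 0 then 1 else 0 := by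
  simp only [UnitAddTorus.mFourier, ContinuousMap.coe_mk]
  rw [integral_fintype_prod_volume_eq_prod]
  simp only [integral_fourier, Finset.prod_ite_zero, Finset.prod_const_one, Finset.mem_univ,
    forall_true_left, funext_iff, Pi.zero_apply]

lemma integrable_unitAddTorus_of_continuous {E : Type*} [NormedAddCommGroup E]
    {f : UnitAddTorus (Fin d) → E} (hf : Continuous f) : Integrable f :=
  hf.integrable_of_hasCompactSupport (.of_compactSpace f)

lemma continuous_stepCharFun : Continuous (stepCharFun : UnitAddTorus (Fin d) → ℂ) := by
  unfold stepCharFun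
  fun_prop

lemma IsSRWLaw.measureReal_apply_succ (hd : 0 < d) (h : IsSRWLaw μ x) (m : ℕ) (y : V d) :
    μ.real {ω | ω (m + 1) = y} =
      (2 * (d : ℝ))⁻¹ * ∑ e, (afterRay μ 1 x e).real {ω | ω m = y} := by
  have hfin (e : Fin d × ℤˣ) : IsProbabilityMeasure (afterRay μ 1 x e) :=
    (h.isSRWLaw_afterRay hd 1 e).1
  have hE : MeasurableSet {ω : ℕ → V d | ω m = y} := measurableSet_apply_mem m {y}
  change (μ (shift 1 ⁻¹' {ω | ω m = y})).toReal = _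
  rw [h.measure_shift_preimage hd hE, ENNReal.toReal_mul,
    ENNReal.toReal_sum fun e _ => measure_ne_top _ _]
  simp [measureReal_def]

lemma IsSRWLaw.measureReal_apply_eq (hd : 0 < d) (h : IsSRWLaw μ x) (m : ℕ) (y : V d) :
    (μ.real {ω | ω m = y} : ℂ) = ∫ t, stepCharFun t ^ m * UnitAddTorus.mFourier (x - y) t := by
  induction m generalizing μ x with
  | zero =>
    have := h.1
    have hstart : {ω : ℕ → V d | ω 0 = y} =ᵐ[μ] {_ω | x = y} := by
      filter_upwards [h.ae_apply_zero hd] with ω hω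
      exact congrArg (· = y) hω
    simp only [pow_zero, one_mul, integral_mFourier, sub_eq_zero, measureReal_congr hstart]
    split_ifs with hxy <;> simp [hxy]
  | succ m ih =>
    rw [h.measureReal_apply_succ hd]
    push_cast
    simp only [fun e => ih (h.isSRWLaw_afterRay hd 1 e), ray_one]
    rw [← integral_finsetSum, ← integral_const_mul]
    · refine integral_congr_ae (.of_forall fun t => ?_)
      simp only [pow_succ, stepCharFun, add_sub_right_comm x, UnitAddTorus.mFourier_add,
        ← Finset.mul_sum]
      ring
    · exact fun e _ => integrable_unitAddTorus_of_continuous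
        ((continuous_stepCharFun.pow m).mul (map_continuous _))

lemma stepCharFun_eq (t : UnitAddTorus (Fin d)) :
    stepCharFun t = ((d : ℝ)⁻¹ * ∑ i, (fourier 1 (t i)).re : ℝ) := by
  have hpair (i : Fin d) : ∑ u : ℤˣ, UnitAddTorus.mFourier (step (i, u)) t =
      2 * ((fourier 1 (t i)).re : ℂ) := by
    have hneg : step (i, -1) = -(Pi.single i 1 : V d) := by simp [step, Pi.single_neg]
    have hone : step (i, 1) = (Pi.single i 1 : V d) := by simp [step]
    rw [show (Finset.univ : Finset ℤˣ) = {1, -1} from rfl, Finset.sum_pair (by decide), hone,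
      hneg, UnitAddTorus.mFourier_neg, UnitAddTorus.mFourier_single, Complex.add_conj]
    simp
  simp only [stepCharFun, Fintype.sum_prod_type, hpair, ← Finset.mul_sum]
  push_cast
  ring

lemma norm_stepCharFun_pow_le (hd : 0 < d) (m : ℕ) (t : UnitAddTorus (Fin d)) :
    ‖stepCharFun t‖ ^ m ≤ ∏ i, Real.exp (-(m / (2 * d)) * (fourier 1 (t i)).im ^ 2) := by
  have hre (i : Fin d) : |(fourier 1 (t i)).re| ≤ 1 - (fourier 1 (t i)).im ^ 2 / 2 := by
    have hnorm : (fourier 1 (t i)).re ^ 2 + (fourier 1 (t i)).im ^ 2 = 1 := by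
      have := Complex.sq_norm (fourier 1 (t i))
      rw [fourier_apply, Circle.norm_coe, Complex.normSq_apply] at this
      rw [fourier_apply]
      linarith
    nlinarith [sq_nonneg (|(fourier 1 (t i)).re| - 1), sq_abs (fourier 1 (t i)).re]
  have hone : ‖stepCharFun t‖ ≤ Real.exp (-(∑ i, (fourier 1 (t i)).im ^ 2) / (2 * d)) := by
    calc ‖stepCharFun t‖ ≤ (d : ℝ)⁻¹ * ∑ i, (1 - (fourier 1 (t i)).im ^ 2 / 2) := by
          rw [stepCharFun_eq, Complex.norm_real, norm_mul, norm_inv, Real.norm_natCast]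
          gcongr
          exact (Finset.abs_sum_le_sum_abs _ _).trans (Finset.sum_le_sum fun i _ => hre i)
      _ = -(∑ i, (fourier 1 (t i)).im ^ 2) / (2 * d) + 1 := by
          simp only [Finset.sum_sub_distrib, ← Finset.sum_div, Finset.sum_const,
            Finset.card_univ, Fintype.card_fin, nsmul_eq_mul]
          field_simp
          ring
      _ ≤ _ := Real.add_one_le_exp _
  calc ‖stepCharFun t‖ ^ m ≤ Real.exp (-(∑ i, (fourier 1 (t i)).im ^ 2) / (2 * d)) ^ m := by
        gcongr
    _ = _ := by
        rw [← Real.exp_nat_mul, ← Real.exp_sum, ← Finset.mul_sum]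
        congr 1
        ring

lemma fourier_one_im (t : ℝ) : (fourier 1 (t : UnitAddCircle)).im = Real.sin (2 * Real.pi * t) := by
  rw [fourier_coe_apply, ← Complex.exp_ofReal_mul_I_im]
  congr 2
  push_cast
  ring

lemma exp_neg_mul_sin_sq_le {c t : ℝ} (hc : 0 ≤ c) (ht : |t| ≤ 1 / 4) :
    Real.exp (-c * Real.sin (2 * Real.pi * t) ^ 2) ≤ Real.exp (-(16 * c) * t ^ 2) := by
  have hsin : 4 * |t| ≤ |Real.sin (2 * Real.pi * t)| := by
    have h2 : |2 * Real.pi * t| ≤ Real.pi / 2 := by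
      rw [abs_mul, abs_of_pos Real.two_pi_pos]
      nlinarith [Real.pi_pos]
    have := Real.mul_abs_le_abs_sin h2
    rw [abs_mul, abs_of_pos Real.two_pi_pos] at this
    convert this using 1
    field_simp
    ring
  have hsq : 16 * t ^ 2 ≤ Real.sin (2 * Real.pi * t) ^ 2 := by
    rw [← sq_abs t, ← sq_abs (Real.sin _)]
    nlinarith [abs_nonneg t]
  exact Real.exp_le_exp.mpr (by nlinarith)

lemma integral_exp_neg_mul_fourier_im_sq_le {c : ℝ} (hc : 0 < c) :
    ∫ t : UnitAddCircle, Real.exp (-c * (fourier 1 t).im ^ 2) ≤ √(Real.pi / c) / 2 := by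
  let g (t : ℝ) : ℝ := Real.exp (-(16 * c) * t ^ 2)
  have hg : Integrable g := integrable_exp_neg_mul_sq (by positivity)
  have hg' : Integrable fun t => g (t - 1 / 2) := hg.comp_sub_right _
  have hdom : ∀ t ∈ Set.Ioc (-1 / 4 : ℝ) (-1 / 4 + 1),
      Real.exp (-c * (fourier 1 (t : UnitAddCircle)).im ^ 2) ≤ g t + g (t - 1 / 2) := by
    intro t ht
    rw [fourier_one_im]
    rcases le_total t (1 / 4) with h4 | h4
    · exact (exp_neg_mul_sin_sq_le hc.le (abs_le.mpr ⟨by linarith [ht.1], h4⟩)).trans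
        (le_add_of_nonneg_right (Real.exp_nonneg _))
    · have hshift : Real.sin (2 * Real.pi * t) = -Real.sin (2 * Real.pi * (t - 1 / 2)) := by
        rw [← Real.sin_add_pi]
        congr 1
        ring
      rw [hshift, neg_sq]
      exact (exp_neg_mul_sin_sq_le hc.le (abs_le.mpr ⟨by linarith, by linarith [ht.2]⟩)).trans
        (le_add_of_nonneg_left (Real.exp_nonneg _))
  rw [← UnitAddCircle.integral_preimage (-1 / 4)]
  calc ∫ t in Set.Ioc (-1 / 4 : ℝ) (-1 / 4 + 1),
        Real.exp (-c * (fourier 1 (t : UnitAddCircle)).im ^ 2)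
      ≤ ∫ t in Set.Ioc (-1 / 4 : ℝ) (-1 / 4 + 1), (g t + g (t - 1 / 2)) := by
        refine setIntegral_mono_on ?_ (hg.add hg').integrableOn measurableSet_Ioc hdom
        exact (Continuous.integrableOn_Icc (by fun_prop)).mono_set Set.Ioc_subset_Icc_self
    _ ≤ ∫ t, (g t + g (t - 1 / 2)) :=
        setIntegral_le_integral (hg.add hg') (.of_forall fun t => by positivity)
    _ = √(Real.pi / c) / 2 := by
        rw [integral_add hg hg', integral_sub_right_eq_self, integral_gaussian,
          ← div_div, div_right_comm, Real.sqrt_div' _ (by norm_num),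
          show √(16 : ℝ) = 4 by rw [Real.sqrt_eq_iff_mul_self_eq] <;> norm_num]
        ring

lemma IsSRWLaw.measureReal_apply_le (hd : 0 < d) (h : IsSRWLaw μ x) {m : ℕ} (hm : 0 < m)
    (y : V d) : μ.real {ω | ω m = y} ≤ √(Real.pi * d / (2 * m)) ^ d := by
  have hc : (0 : ℝ) < m / (2 * d) := by positivity
  have hbase : √(Real.pi / (m / (2 * d))) / 2 = √(Real.pi * d / (2 * m)) := by
    rw [← Real.sqrt_sq zero_le_two, ← Real.sqrt_div (by positivity)]
    congr 1
    field_simp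
    ring
  calc μ.real {ω | ω m = y} = ‖(μ.real {ω | ω m = y} : ℂ)‖ := by
        rw [Complex.norm_real, Real.norm_of_nonneg measureReal_nonneg]
    _ ≤ ∫ t : UnitAddTorus (Fin d), ‖stepCharFun t ^ m * UnitAddTorus.mFourier (x - y) t‖ :=
        h.measureReal_apply_eq hd m y ▸ norm_integral_le_integral_norm _
    _ ≤ ∫ t : UnitAddTorus (Fin d),
          ∏ i, Real.exp (-(m / (2 * d)) * (fourier 1 (t i)).im ^ 2) := by
        refine integral_mono ?_ ?_ fun t => ?_
        · exact integrable_unitAddTorus_of_continuous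
            ((continuous_stepCharFun.pow m).mul (map_continuous _)).norm
        · exact integrable_unitAddTorus_of_continuous (by fun_prop)
        · have hle := ContinuousMap.norm_coe_le_norm (UnitAddTorus.mFourier (x - y)) t
          rw [UnitAddTorus.mFourier_norm] at hle
          rw [norm_mul, norm_pow]
          exact (mul_le_of_le_one_right (by positivity) hle).trans (norm_stepCharFun_pow_le hd m t)
    _ = ∏ i : Fin d, ∫ s : UnitAddCircle, Real.exp (-(m / (2 * d)) * (fourier 1 s).im ^ 2) :=
        integral_fintype_prod_volume_eq_prod
          fun _ s => Real.exp (-(m / (2 * d)) * (fourier 1 s).im ^ 2)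
    _ ≤ √(Real.pi * d / (2 * m)) ^ d := by
        rw [Finset.prod_const, Finset.card_univ, Fintype.card_fin, ← hbase]
        gcongr
        exact integral_exp_neg_mul_fourier_im_sq_le hc

/-! ### Exit times -/

lemma finite_cube (x : V d) (r : ℕ) : (cube x r).Finite :=
  (Set.finite_Icc (x - fun _ => (r : ℤ)) (x + fun _ => (r : ℤ))).subset fun y hy =>
    ⟨fun i => by simpa using (abs_le.mp (hy i)).1,
      fun i => by simpa [add_comm] using (abs_le.mp (hy i)).2⟩

lemma mem_cube_zero_iff {v : V d} {n : ℕ} : v ∈ cube 0 n ↔ ∀ e, height e v ≤ n := by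
  simp only [cube, Set.mem_ofPred_eq, Pi.zero_apply, sub_zero, Prod.forall, height, abs_le]
  refine forall_congr' fun i => ⟨fun hv u => ?_, fun hv => ⟨?_, ?_⟩⟩
  · rcases Int.units_eq_one_or u with rfl | rfl <;> simp <;> lia
  · simpa [neg_le] using hv (-1)
  · simpa using hv 1

lemma neg_le_height_of_mem_cube {v : V d} {n : ℕ} (hv : v ∈ cube 0 n) (e : Fin d × ℤˣ) :
    -(n : ℤ) ≤ height e v := by
  simpa [height, neg_le] using mem_cube_zero_iff.mp hv (e.1, -e.2)

lemma IsSRWLaw.ae_exists_notMem (hd : 0 < d) (h : IsSRWLaw μ x) {Q : Set (V d)}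
    (hQ : Q.Finite) : ∀ᵐ ω ∂μ, ∃ t, ω t ∉ Q := by
  have := h.1
  have hle (m : ℕ) : μ.real {ω | ∀ t, ω t ∈ Q} ≤
      hQ.toFinset.card * √(Real.pi * d / (2 * (m + 1 : ℕ))) ^ d := by
    calc μ.real {ω | ∀ t, ω t ∈ Q} ≤ μ.real (⋃ y ∈ hQ.toFinset, {ω | ω (m + 1) = y}) :=
          measureReal_mono (fun ω hω => by simpa using hω (m + 1)) (measure_ne_top _ _)
      _ ≤ ∑ y ∈ hQ.toFinset, μ.real {ω | ω (m + 1) = y} := measureReal_biUnion_finset_le _ _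
      _ ≤ hQ.toFinset.card * √(Real.pi * d / (2 * (m + 1 : ℕ))) ^ d := by
          rw [← nsmul_eq_mul]
          exact Finset.sum_le_card_nsmul _ _ _ fun y _ => h.measureReal_apply_le hd m.succ_pos y
  have hlim : Filter.Tendsto
      (fun m : ℕ => hQ.toFinset.card * √(Real.pi * d / (2 * (m + 1 : ℕ))) ^ d)
      Filter.atTop (nhds 0) := by
    have hinv : Filter.Tendsto (fun m : ℕ => Real.pi * d / (2 * (m + 1 : ℕ))) Filter.atTop
        (nhds 0) :=
      Filter.Tendsto.const_div_atTop ((tendsto_natCast_atTop_atTop.comp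
        (Filter.tendsto_add_atTop_nat 1)).const_mul_atTop two_pos) _
    simpa [hd.ne'] using ((hinv.sqrt).pow d).const_mul (hQ.toFinset.card : ℝ)
  have hnull := (measureReal_eq_zero_iff (by finiteness)).mp
    (le_antisymm (ge_of_tendsto' hlim hle) measureReal_nonneg)
  filter_upwards [measure_eq_zero_iff_ae_notMem.mp hnull] with ω hω
  simpa using hω

section ExitTime

variable {Q : Set (V d)} {ω : ℕ → V d}

lemma exitTime_eq_find (h : ∃ t, ω t ∉ Q) : exitTime Q ω = Nat.find h := by
  simp [exitTime, exitTimeE, dif_pos h]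

lemma apply_exitTime_notMem (h : ∃ t, ω t ∉ Q) : ω (exitTime Q ω) ∉ Q := by
  rw [exitTime_eq_find h]
  exact Nat.find_spec h

lemma apply_mem_of_lt_exitTime {t : ℕ} (ht : t < exitTime Q ω) : ω t ∈ Q := by
  by_cases h : ∃ t, ω t ∉ Q
  · rw [exitTime_eq_find h] at ht
    exact not_not.mp (Nat.find_min h ht)
  · push Not at h
    exact h t

lemma exitTime_le {t : ℕ} (ht : ω t ∉ Q) : exitTime Q ω ≤ t :=
  not_lt.mp fun hlt => ht (apply_mem_of_lt_exitTime hlt)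

lemma exitTime_pos (h : ∃ t, ω t ∉ Q) (h0 : ω 0 ∈ Q) : 0 < exitTime Q ω :=
  Nat.pos_of_ne_zero fun hzero => apply_exitTime_notMem h (hzero ▸ h0)

end ExitTime

lemma measurable_exitTime (Q : Set (V d)) : Measurable (exitTime Q : (ℕ → V d) → ℕ) := by
  have hex (ω : ℕ → V d) : ∃ t, ω t ∉ Q ∨ ∀ j, ω j ∈ Q := by
    by_contra! h
    obtain ⟨j, hj⟩ := (h 0).2
    exact hj (h j).1
  have hfind : Measurable fun ω => Nat.find (hex ω) := by
    have hstay : MeasurableSet {ω : ℕ → V d | ∀ j, ω j ∈ Q} := by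
      simp only [Set.ofPred_forall]
      exact .iInter fun j => measurableSet_apply_mem j Q
    exact measurable_find hex fun t => (measurableSet_apply_mem t Qᶜ).union hstay
  convert hfind using 2 with ω
  by_cases h : ∃ t, ω t ∉ Q
  · simp only [exitTime_eq_find h, show ¬ ∀ j, ω j ∈ Q by simpa using h, or_false]
  · have hjunk : exitTime Q ω = 0 := by simp [exitTime, exitTimeE, dif_neg h]
    rw [hjunk, eq_comm, Nat.find_eq_zero]
    exact .inr (by simpa using h)

lemma measurable_apply_exitTime (Q : Set (V d)) :
    Measurable fun ω : ℕ → V d => ω (exitTime Q ω) := by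
  have heval : Measurable fun p : (ℕ → V d) × ℕ => p.1 p.2 :=
    measurable_from_prod_countable_left fun t => measurable_pi_apply t
  exact heval.comp (measurable_id.prodMk (measurable_exitTime Q))

/-! ### Separation of two paths -/

/-- The event `F_n`, for pairs of paths. -/
def disjointEvent (d n : ℕ) : Set ((ℕ → V d) × (ℕ → V d)) :=
  {p | rangeSet 1 (exitTime (cube 0 n) p.1) p.1 ∩ rangeSet 1 (exitTime (cube 0 n) p.2) p.2 = ∅}

/-- The event `Z_n ≥ n / 2`, for pairs of paths. -/
def separatedEvent (d n : ℕ) : Set ((ℕ → V d) × (ℕ → V d)) :=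
  {p | (n : ℝ) / 2 ≤
    max (eudistSet (p.1 (exitTime (cube 0 n) p.1)) (rangeSet 1 (exitTime (cube 0 n) p.2) p.2))
      (eudistSet (p.2 (exitTime (cube 0 n) p.2)) (rangeSet 0 (exitTime (cube 0 n) p.1) p.1))}

/-- The event that two paths have a common site at positive, possibly different, times. -/
def meetEvent (d : ℕ) : Set ((ℕ → V d) × (ℕ → V d)) :=
  {p | ∃ i j, 1 ≤ i ∧ 1 ≤ j ∧ p.1 i = p.2 j}

/-- The event that a path gets above height `n / 2` in the direction `e` by its exit from the
cube `Q_n`. -/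
def climbEvent (n : ℕ) (e : Fin d × ℤˣ) : Set (ℕ → V d) :=
  {ω | ∃ j ≤ exitTime (cube 0 n) ω, (n : ℤ) < 2 * height e (ω j)}

lemma mem_disjointEvent_of_notMem_meetEvent {p : (ℕ → V d) × (ℕ → V d)} (n : ℕ)
    (hp : p ∉ meetEvent d) : p ∈ disjointEvent d n := by
  refine Set.eq_empty_of_forall_notMem ?_
  rintro _ ⟨⟨i, hi, _, rfl⟩, j, hj, _, hij⟩
  exact hp ⟨i, j, hi, hj, hij.symm⟩

lemma height_sub_height_le_eudist (e : Fin d × ℤˣ) (v w : V d) :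
    (height e v - height e w : ℝ) ≤ eudist v w := by
  have habs : |(height e v - height e w : ℝ)| = |(v e.1 - w e.1 : ℝ)| :=
    mod_cast abs_height_sub e v w
  rw [eudist]
  refine (le_abs_self _).trans (habs ▸ Real.abs_le_sqrt ?_)
  exact Finset.single_le_sum (f := fun i => ((v i : ℝ) - w i) ^ 2) (fun _ _ => sq_nonneg _)
    (Finset.mem_univ e.1)

lemma mem_separatedEvent_of_height {p : (ℕ → V d) × (ℕ → V d)} {n : ℕ} (e : Fin d × ℤˣ)
    (hp : (n : ℤ) < height e (p.1 (exitTime (cube 0 n) p.1)))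
    (hpos : 0 < exitTime (cube 0 n) p.2) (hclimb : p.2 ∉ climbEvent n e) :
    p ∈ separatedEvent d n := by
  rw [separatedEvent, Set.mem_ofPred_eq]
  refine le_max_of_le_left (le_csInf (Set.Nonempty.image _ ?_) ?_)
  · exact ⟨p.2 1, 1, le_rfl, hpos, rfl⟩
  rintro _ ⟨_, ⟨j, _, hj, rfl⟩, rfl⟩
  have hlow : 2 * height e (p.2 j) ≤ n := not_lt.mp fun hlt => hclimb ⟨j, hj, hlt⟩
  have hlow' : 2 * (height e (p.2 j) : ℝ) ≤ n := mod_cast hlow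
  have hp' : (n : ℝ) < height e (p.1 (exitTime (cube 0 n) p.1)) := mod_cast hp
  linarith [height_sub_height_le_eudist e (p.1 (exitTime (cube 0 n) p.1)) (p.2 j)]

lemma abs_height_sub_le_of_path {ω : ℕ → V d} (hω : ∀ k, adj (ω k) (ω (k + 1)))
    (e : Fin d × ℤˣ) (i j : ℕ) : |height e (ω i) - height e (ω j)| ≤ |(i : ℤ) - j| := by
  wlog hij : i ≤ j generalizing i j
  · simpa only [abs_sub_comm] using this j i (le_of_not_ge hij)
  induction j, hij using Nat.le_induction with
  | base => simp
  | succ j hij ih =>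
    have hstep := abs_height_sub_le_of_adj e (hω j)
    have htri := abs_sub_le (height e (ω i)) (height e (ω j)) (height e (ω (j + 1)))
    rw [abs_of_nonpos (a := (i : ℤ) - j) (by lia)] at ih
    rw [abs_of_nonpos (a := (i : ℤ) - (j + 1 : ℕ)) (by lia)]
    push_cast
    linarith

lemma height_of_mem_pathCylinder_ray {ω : ℕ → V d} {k i : ℕ} {e' : Fin d × ℤˣ}
    (hω : ω ∈ pathCylinder k (ray 0 e')) (hi : i ≤ k) (e : Fin d × ℤˣ) :
    height e (ω i) = i * height e (step e') := by
  rw [hω i hi, height_ray, height_zero, zero_add]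

lemma height_neg_step_self (z : Fin d) (u : ℤˣ) : height (z, u) (step (z, -u)) = -1 := by
  simp [height, step, ← Units.val_mul]

/-- Two paths that follow opposite rays for `k` steps are `2 * k` apart at time `k`, and have to
make up this distance before they meet. -/
lemma le_add_of_meet {ω ω' : ℕ → V d} {k i j : ℕ} {z : Fin d}
    (hω : ω ∈ pathCylinder k (ray 0 (z, 1))) (hω' : ω' ∈ pathCylinder k (ray 0 (z, -1)))
    (hadj : ∀ t, adj (ω t) (ω (t + 1))) (hadj' : ∀ t, adj (ω' t) (ω' (t + 1)))
    (hi : 1 ≤ i) (hij : ω i = ω' j) : k ≤ (i - k) + (j - k) := by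
  have hk := height_of_mem_pathCylinder_ray hω le_rfl (z, 1)
  have hk' := height_of_mem_pathCylinder_ray hω' le_rfl (z, 1)
  rw [height_step_self, mul_one] at hk
  rw [height_neg_step_self] at hk'
  have hL := (abs_le.mp (abs_height_sub_le_of_path hadj (z, 1) i k)).1
  have hL' := (abs_le.mp (abs_height_sub_le_of_path hadj' (z, 1) j k)).2
  rw [hij] at hL
  rcases abs_cases ((i : ℤ) - k) with ⟨h, _⟩ | ⟨h, _⟩ <;>
    rcases abs_cases ((j : ℤ) - k) with ⟨h', _⟩ | ⟨h', _⟩ <;> lia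

/-! ### The climbing and meeting probabilities -/

lemma IsSRWLaw.ae_rayLaw (hd : 0 < d) (h : IsSRWLaw μ x) (k : ℕ) (e : Fin d × ℤˣ) :
    ∀ᵐ ω ∂rayLaw μ k x e, ω ∈ pathCylinder k (ray x e) ∧ ∀ t, adj (ω t) (ω (t + 1)) :=
  (ae_cond_mem (measurableSet_pathCylinder _ _)).and
    (cond_absolutelyContinuous.ae_le (h.ae_adj hd))

lemma climbEvent_inter_pathCylinder_subset {n k : ℕ} (hk : 8 * k ≤ n + 1) (e e' : Fin d × ℤˣ) :
    climbEvent n e ∩ pathCylinder k (ray 0 e') ⊆ shift k ⁻¹'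
      hitEvent {v | -(n : ℤ) ≤ height e v} {v | ((n / 2 + 1 : ℕ) : ℤ) ≤ height e v} := by
  rintro ω ⟨⟨j, hj, hlt⟩, hω⟩
  have hkj : k < j := by
    by_contra! hjk
    have hstep := mul_le_mul_of_nonneg_left (abs_le.mp (abs_height_step_le e e')).2
      (Int.natCast_nonneg j)
    rw [height_of_mem_pathCylinder_ray hω hjk] at hlt
    lia
  refine ⟨j - k, ?_, fun i hi => ?_⟩
  · simp only [shift, Nat.sub_add_cancel hkj.le, Set.mem_ofPred_eq]
    lia
  · exact neg_le_height_of_mem_cube (apply_mem_of_lt_exitTime (t := i + k) (by lia)) e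

lemma IsSRWLaw.rayLaw_climbEvent_le (hd : 0 < d) (h : IsSRWLaw μ 0) {n k : ℕ}
    (hk : 8 * k ≤ n + 1) (e e' : Fin d × ℤˣ) : rayLaw μ k 0 e' (climbEvent n e) ≤ 3 / 4 := by
  set E := hitEvent {v : V d | -(n : ℤ) ≤ height e v} {v | ((n / 2 + 1 : ℕ) : ℤ) ≤ height e v}
  have hsub : rayLaw μ k 0 e' (climbEvent n e) ≤ afterRay μ k 0 e' E :=
    calc rayLaw μ k 0 e' (climbEvent n e) ≤ rayLaw μ k 0 e' (shift k ⁻¹' E) := by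
          refine measure_mono_ae ((h.ae_rayLaw hd k e').mono fun ω hω hclimb => ?_)
          exact climbEvent_inter_pathCylinder_subset hk e e' ⟨hclimb, hω.1⟩
      _ ≤ afterRay μ k 0 e' E := Measure.le_map_apply (measurable_shift k).aemeasurable E
  have hruin := (h.isSRWLaw_afterRay hd k e').gamblers_ruin hd e n (n / 2 + 1)
  have hstart : 4 * (height e (ray 0 e' k) + (n + 1)).toNat ≤ 3 * (n + (n / 2 + 1) + 1) := by
    have hstep := mul_le_mul_of_nonneg_left (abs_le.mp (abs_height_step_le e e')).2
      (Int.natCast_nonneg k)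
    rw [height_ray, height_zero]
    lia
  rw [ENNReal.le_div_iff_mul_le (by simp) (by simp)]
  refine (ENNReal.mul_le_mul_iff_right (a := ((n + (n / 2 + 1) + 1 : ℕ) : ℝ≥0∞)) (by simp)
    (by finiteness)).mp ?_
  calc ((n + (n / 2 + 1) + 1 : ℕ) : ℝ≥0∞) * (rayLaw μ k 0 e' (climbEvent n e) * 4)
      ≤ 4 * (((n + (n / 2 + 1) + 1 : ℕ) : ℝ≥0∞) * afterRay μ k 0 e' E) := by
        rw [← mul_assoc, mul_comm]
        gcongr
    _ ≤ 4 * heightAbove e n (ray 0 e' k) := by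
        gcongr
        exact_mod_cast hruin
    _ ≤ ((n + (n / 2 + 1) + 1 : ℕ) : ℝ≥0∞) * 3 := by
        rw [mul_comm _ 3, heightAbove]
        exact_mod_cast hstart

lemma measure_prod_fibre_le {α β ι : Type*} [MeasurableSpace α] [MeasurableSpace β] [Countable ι]
    [MeasurableSpace ι] [MeasurableSingletonClass ι] (μ : Measure α) (ν : Measure β) [SFinite ν]
    {X : α → ι} (hX : Measurable X) {H : ι → Set β} {b : ℝ≥0∞} (hb : ∀ i, ν (H i) ≤ b) :
    μ.prod ν {p | p.2 ∈ H (X p.1)} ≤ μ Set.univ * b := by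
  have hfib (i : ι) : MeasurableSet (X ⁻¹' {i}) := hX (measurableSet_singleton i)
  calc μ.prod ν {p | p.2 ∈ H (X p.1)} ≤ ∑' i, μ.prod ν ((X ⁻¹' {i}) ×ˢ H i) := by
        refine (measure_mono fun p hp => ?_).trans (measure_iUnion_le _)
        exact Set.mem_iUnion.mpr ⟨X p.1, rfl, hp⟩
    _ ≤ ∑' i, μ (X ⁻¹' {i}) * b := ENNReal.tsum_le_tsum fun i => by
        rw [Measure.prod_prod]
        gcongr
        exact hb i
    _ = μ Set.univ * b := by
        rw [ENNReal.tsum_mul_right, ← measure_iUnion _ hfib, ← Set.preimage_iUnion,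
          Set.iUnion_of_singleton, Set.preimage_univ]
        exact fun i j hij => (Set.disjoint_singleton.mpr hij).preimage X

/-- Up to `ENNReal.ofReal`, a bound on the probability that two walks, started along opposite rays,
meet at the times `p.1` and `p.2`. -/
noncomputable def meetingWeight (d : ℕ) (p : ℕ × ℕ) : ℝ :=
  √(3 * Real.pi * d / (2 * √(p.1 * p.2))) ^ d

lemma summable_meetingWeight (hd : 5 ≤ d) : Summable (meetingWeight d) := by
  have hexp : (-(d / 4) : ℝ) < -1 := by
    have : (5 : ℝ) ≤ d := mod_cast hd
    linarith
  have hsum := Real.summable_nat_rpow.mpr hexp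
  have hprod := (hsum.mul_of_nonneg hsum (fun n => by positivity) fun n => by positivity).mul_left
    (√(3 * Real.pi * d / 2) ^ d)
  refine hprod.congr fun p => ?_
  have hpow (n : ℕ) : √√(n : ℝ) ^ d = (n : ℝ) ^ (d / 4 : ℝ) := by
    rw [Real.sqrt_eq_rpow, Real.sqrt_eq_rpow, ← Real.rpow_mul (by positivity),
      ← Real.rpow_mul_natCast (by positivity)]
    ring_nf
  have hroot : √(3 * Real.pi * d / (2 * √(p.1 * p.2))) =
      √(3 * Real.pi * d / 2) / (√√p.1 * √√p.2) := by
    rw [← div_div, Real.sqrt_div (by positivity), Real.sqrt_mul p.1.cast_nonneg,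
      Real.sqrt_mul (by positivity) √p.2]
  rw [meetingWeight, hroot, div_pow, mul_pow, hpow, hpow, Real.rpow_neg (by positivity),
    Real.rpow_neg (by positivity), ← mul_inv, ← div_eq_mul_inv]

lemma exists_tsum_tail_le {α : Type*} {f : α → ℝ≥0∞} (hf : ∑' a, f a ≠ ∞) (r : α → ℕ) {ε : ℝ≥0∞}
    (hε : ε ≠ 0) : ∃ k, ∑' a : {a | k ≤ r a}, f a ≤ ε := by
  obtain ⟨s, hs⟩ := ((ENNReal.tendsto_tsum_compl_atTop_zero hf).eventually_le_const
    (pos_iff_ne_zero.mpr hε)).exists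
  refine ⟨s.sup r + 1, (ENNReal.tsum_mono_subtype f fun a ha => ?_).trans hs⟩
  exact fun has => absurd (Finset.le_sup (f := r) has) (not_le.mpr ha)

lemma IsSRWLaw.rayLaw_apply_eq_le (hd : 0 < d) (h : IsSRWLaw μ x) {k i j : ℕ} (hi : 1 ≤ i)
    (hij : i ≤ j) (hk : k ≤ 2 * (j - k)) (e : Fin d × ℤˣ) (y : V d) :
    rayLaw μ k x e {ω | ω j = y} ≤ ENNReal.ofReal (meetingWeight d (i, j)) := by
  have := h.isProbabilityMeasure_rayLaw k e
  have hafter := h.isSRWLaw_afterRay hd k e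
  have := hafter.1
  have hgeom : √(i * j : ℝ) ≤ 3 * (j - k : ℕ) := by
    have hij' : (i : ℝ) ≤ j := mod_cast hij
    have hjk : (j : ℝ) ≤ 3 * (j - k : ℕ) := mod_cast (by lia : j ≤ 3 * (j - k))
    exact (Real.sqrt_le_iff.mpr ⟨by positivity, by nlinarith⟩).trans hjk
  calc rayLaw μ k x e {ω | ω j = y} ≤ afterRay μ k x e {ω | ω (j - k) = y} := by
        refine le_of_eq_of_le ?_ (Measure.le_map_apply (measurable_shift k).aemeasurable _)
        simp only [Set.preimage, shift, Set.mem_ofPred_eq, show j - k + k = j by lia]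
    _ ≤ ENNReal.ofReal (√(Real.pi * d / (2 * (j - k : ℕ))) ^ d) := by
        rw [← ofReal_measureReal]
        exact ENNReal.ofReal_le_ofReal (hafter.measureReal_apply_le hd (by lia) y)
    _ ≤ ENNReal.ofReal (meetingWeight d (i, j)) := by
        have : (0 : ℝ) < i := mod_cast hi
        have : (0 : ℝ) < j := mod_cast hi.trans hij
        have : (0 : ℝ) < (j - k : ℕ) := mod_cast (by lia : 0 < j - k)
        refine ENNReal.ofReal_le_ofReal (pow_le_pow_left₀ (by positivity) (Real.sqrt_le_sqrt ?_) d)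
        rw [div_le_div_iff₀ (by positivity) (by positivity)]
        have := mul_le_mul_of_nonneg_left hgeom (show 0 ≤ 2 * Real.pi * d by positivity)
        linarith

variable {μ' : Measure (ℕ → V d)}

lemma IsSRWLaw.prod_rayLaw_apply_eq_apply_le (hd : 0 < d) (h : IsSRWLaw μ x) {x' : V d}
    (h' : IsSRWLaw μ' x') {k i j : ℕ} (hi : 1 ≤ i) (hj : 1 ≤ j) (hk : k ≤ (i - k) + (j - k))
    (e e' : Fin d × ℤˣ) :
    (rayLaw μ k x e).prod (rayLaw μ' k x' e') {p | p.1 i = p.2 j} ≤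
      ENNReal.ofReal (meetingWeight d (i, j)) := by
  have := h.isProbabilityMeasure_rayLaw k e
  have := h'.isProbabilityMeasure_rayLaw k e'
  wlog hij : i ≤ j generalizing μ μ' x x' i j e e'
  · have hmeas : MeasurableSet {p : (ℕ → V d) × (ℕ → V d) | p.1 i = p.2 j} :=
      measurableSet_eq_fun (by fun_prop) (by fun_prop)
    rw [← Measure.prod_swap, Measure.map_apply measurable_swap hmeas]
    simpa only [meetingWeight, mul_comm, Set.preimage, Prod.fst_swap, Prod.snd_swap,
      Set.mem_ofPred_eq, eq_comm] using
      this h' h hj hi (by lia) e' e ‹_› ‹_› (le_of_not_ge hij)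
  simpa [eq_comm] using measure_prod_fibre_le (rayLaw μ k x e) (rayLaw μ' k x' e')
    (measurable_pi_apply i) fun y => h'.rayLaw_apply_eq_le hd hi hij (by lia) e' y

lemma ae_prod_and {α β : Type*} [MeasurableSpace α] [MeasurableSpace β] {μ : Measure α}
    {ν : Measure β} {P : α → Prop} {Q : β → Prop} (hP : ∀ᵐ a ∂μ, P a) (hQ : ∀ᵐ b ∂ν, Q b) :
    ∀ᵐ p ∂μ.prod ν, P p.1 ∧ Q p.2 :=
  (Measure.quasiMeasurePreserving_fst.ae hP).and (Measure.quasiMeasurePreserving_snd.ae hQ)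

lemma exists_prod_rayLaw_meetEvent_le (hd : 5 ≤ d) {ε : ℝ≥0∞} (hε : ε ≠ 0) :
    ∃ k, ∀ μ μ' : Measure (ℕ → V d), IsSRWLaw μ 0 → IsSRWLaw μ' 0 → ∀ z : Fin d,
      (rayLaw μ k 0 (z, 1)).prod (rayLaw μ' k 0 (z, -1)) (meetEvent d) ≤ ε := by
  obtain ⟨k, hk⟩ := exists_tsum_tail_le (summable_meetingWeight hd).tsum_ofReal_ne_top
    (fun q => q.1 + q.2) hε
  refine ⟨k, fun μ μ' h h' z => ?_⟩
  have hd0 : 0 < d := by lia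
  let I : Set (ℕ × ℕ) := {q | 1 ≤ q.1 ∧ 1 ≤ q.2 ∧ k ≤ (q.1 - k) + (q.2 - k)}
  have hsub : ∀ᵐ p ∂(rayLaw μ k 0 (z, 1)).prod (rayLaw μ' k 0 (z, -1)),
      p ∈ meetEvent d → p ∈ ⋃ q : I, {p | p.1 q.1.1 = p.2 q.1.2} := by
    filter_upwards [ae_prod_and (h.ae_rayLaw hd0 k (z, 1)) (h'.ae_rayLaw hd0 k (z, -1))]
    rintro p ⟨⟨hray, hadj⟩, hray', hadj'⟩ ⟨i, j, hi, hj, hij⟩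
    exact Set.mem_iUnion.mpr
      ⟨⟨(i, j), hi, hj, le_add_of_meet hray hray' hadj hadj' hi hij⟩, hij⟩
  calc (rayLaw μ k 0 (z, 1)).prod (rayLaw μ' k 0 (z, -1)) (meetEvent d)
      ≤ ∑' q : I, (rayLaw μ k 0 (z, 1)).prod (rayLaw μ' k 0 (z, -1))
          {p | p.1 q.1.1 = p.2 q.1.2} := (measure_mono_ae hsub).trans (measure_iUnion_le _)
    _ ≤ ∑' q : I, ENNReal.ofReal (meetingWeight d q) := ENNReal.tsum_le_tsum fun q =>
        h.prod_rayLaw_apply_eq_apply_le hd0 h' q.2.1 q.2.2.1 q.2.2.2 _ _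
    _ ≤ ∑' q : {q : ℕ × ℕ | k ≤ q.1 + q.2}, ENNReal.ofReal (meetingWeight d q) :=
        ENNReal.tsum_mono_subtype (fun q => ENNReal.ofReal (meetingWeight d q))
          fun q hq => hq.2.2.trans (by lia)
    _ ≤ ε := hk

/-! ### The separation event -/

lemma exists_direction (hd : 0 < d) (n : ℕ) :
    ∃ dir : V d → Fin d × ℤˣ, ∀ v ∉ cube 0 n, (n : ℤ) < height (dir v) v := by
  have : Nonempty (Fin d × ℤˣ) := ⟨⟨0, hd⟩, 1⟩
  refine ⟨fun v => Classical.epsilon fun e => (n : ℤ) < height e v, fun v hv => ?_⟩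
  simp only [mem_cube_zero_iff, not_forall, not_le] at hv
  exact Classical.epsilon_spec hv

lemma IsSRWLaw.ae_rayLaw_exit (hd : 0 < d) (h : IsSRWLaw μ 0) (k n : ℕ) (e : Fin d × ℤˣ) :
    ∀ᵐ ω ∂rayLaw μ k 0 e, (∃ t, ω t ∉ cube 0 n) ∧ ω 0 ∈ cube 0 n := by
  filter_upwards [cond_absolutelyContinuous.ae_le (h.ae_exists_notMem hd (finite_cube 0 n)),
    h.ae_rayLaw hd k e] with ω hexit hray
  refine ⟨hexit, ?_⟩
  rw [hray.1 0 k.zero_le, ray_zero, mem_cube_zero_iff]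
  simp

lemma IsSRWLaw.le_prod_rayLaw_of_le (hd : 0 < d) (h : IsSRWLaw μ 0) (h' : IsSRWLaw μ' 0)
    {n k : ℕ} (hk : 8 * k ≤ n + 1) {e e' : Fin d × ℤˣ}
    (hmeet : (rayLaw μ k 0 e).prod (rayLaw μ' k 0 e') (meetEvent d) ≤ 1 / 8) :
    1 / 8 ≤ (rayLaw μ k 0 e).prod (rayLaw μ' k 0 e') (disjointEvent d n ∩ separatedEvent d n) := by
  have := h.isProbabilityMeasure_rayLaw k e
  have := h'.isProbabilityMeasure_rayLaw k e'
  set P := (rayLaw μ k 0 e).prod (rayLaw μ' k 0 e')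
  obtain ⟨dir, hdir⟩ := exists_direction hd n
  let climb : Set ((ℕ → V d) × (ℕ → V d)) :=
    {p | p.2 ∈ climbEvent n (dir (p.1 (exitTime (cube 0 n) p.1)))}
  have hclimb : P climb ≤ 3 / 4 := by
    simpa using measure_prod_fibre_le (rayLaw μ k 0 e) (rayLaw μ' k 0 e')
      (measurable_apply_exitTime (cube 0 n)) fun v => h'.rayLaw_climbEvent_le hd hk (dir v) e'
  have hcover : ∀ᵐ p ∂P, p ∈ Set.univ →
      p ∈ (disjointEvent d n ∩ separatedEvent d n) ∪ (meetEvent d ∪ climb) := by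
    filter_upwards [ae_prod_and (h.ae_rayLaw_exit hd k n e) (h'.ae_rayLaw_exit hd k n e')]
    rintro p ⟨⟨hexit, -⟩, hexit', h0⟩ -
    by_contra hp
    simp only [Set.mem_union, not_or] at hp
    obtain ⟨hfar, hmeet, hclimb⟩ := hp
    exact hfar ⟨mem_disjointEvent_of_notMem_meetEvent n hmeet, mem_separatedEvent_of_height _
      (hdir _ (apply_exitTime_notMem hexit)) (exitTime_pos hexit' h0) hclimb⟩
  have hone : (1 / 8 + (1 / 8 + 3 / 4) : ℝ≥0∞) = 1 := by
    rw [← ENNReal.toReal_eq_one_iff, ENNReal.toReal_add (by finiteness) (by finiteness),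
      ENNReal.toReal_add (by finiteness) (by finiteness)]
    norm_num
  by_contra! hlt
  have hlt_one : P Set.univ < 1 / 8 + (1 / 8 + 3 / 4) :=
    ((measure_mono_ae hcover).trans (measure_union_le _ _)).trans_lt <|
      ENNReal.add_lt_add_of_lt_of_le (by finiteness) hlt
        ((measure_union_le _ _).trans (add_le_add hmeet hclimb))
  exact (hone ▸ hlt_one).ne measure_univ

lemma exitTime_cube_of_mem_pathCylinder_ray {ω : ℕ → V d} {n : ℕ} {e : Fin d × ℤˣ}
    (hω : ω ∈ pathCylinder (n + 1) (ray 0 e)) : exitTime (cube 0 n) ω = n + 1 := by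
  have hexit : ω (n + 1) ∉ cube 0 n := fun hmem => by
    have := mem_cube_zero_iff.mp hmem e
    rw [height_of_mem_pathCylinder_ray hω le_rfl, height_step_self] at this
    lia
  refine le_antisymm (exitTime_le hexit) (not_lt.mp fun hlt => ?_)
  refine apply_exitTime_notMem ⟨n + 1, hexit⟩ (mem_cube_zero_iff.mpr fun e' => ?_)
  rw [height_of_mem_pathCylinder_ray hω hlt.le]
  calc (exitTime (cube 0 n) ω : ℤ) * height e' (step e) ≤ exitTime (cube 0 n) ω * 1 := by
        gcongr
        exact (abs_le.mp (abs_height_step_le e' e)).2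
    _ ≤ n := by lia

lemma prod_pathCylinder_ray_subset (n : ℕ) (z : Fin d) :
    pathCylinder (n + 1) (ray 0 (z, 1)) ×ˢ pathCylinder (n + 1) (ray 0 (z, -1)) ⊆
      disjointEvent d n ∩ separatedEvent d n := by
  rintro p ⟨hray, hray'⟩
  have hT := exitTime_cube_of_mem_pathCylinder_ray hray
  have hT' := exitTime_cube_of_mem_pathCylinder_ray hray'
  have hheight {i : ℕ} (hi : i ≤ n + 1) : height (z, 1) (p.1 i) = i := by
    rw [height_of_mem_pathCylinder_ray hray hi, height_step_self, mul_one]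
  have hheight' {j : ℕ} (hj : j ≤ n + 1) : height (z, 1) (p.2 j) = -j := by
    rw [height_of_mem_pathCylinder_ray hray' hj, height_neg_step_self, mul_neg_one]
  constructor
  · refine Set.eq_empty_of_forall_notMem ?_
    rintro _ ⟨⟨i, hi, hiT, rfl⟩, j, _, hjT, hij⟩
    have hsame := hheight' (hjT.trans hT'.le)
    rw [hij, hheight (hiT.trans hT.le)] at hsame
    lia
  · refine mem_separatedEvent_of_height (z, 1) ?_ (by lia) ?_
    · rw [hT, hheight le_rfl]
      lia
    · rintro ⟨j, hjT, hlt⟩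
      rw [hheight' (hjT.trans hT'.le)] at hlt
      lia

lemma mul_prod_cond_le {α β : Type*} [MeasurableSpace α] [MeasurableSpace β] (μ : Measure α)
    (ν : Measure β) [SFinite μ] [SFinite ν] (s : Set α) (t : Set β) (E : Set (α × β)) :
    μ s * ν t * (μ[|s]).prod ν[|t] E ≤ μ.prod ν E := by
  rw [ProbabilityTheory.cond, ProbabilityTheory.cond, Measure.prod_smul_left,
    Measure.prod_smul_right, Measure.prod_restrict]
  simp only [Measure.smul_apply, smul_eq_mul]
  calc μ s * ν t * ((μ s)⁻¹ * ((ν t)⁻¹ * (μ.prod ν).restrict (s ×ˢ t) E))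
      = μ s * (μ s)⁻¹ * (ν t * (ν t)⁻¹) * (μ.prod ν).restrict (s ×ˢ t) E := by ring
    _ ≤ 1 * 1 * μ.prod ν E := by
        gcongr
        exacts [ENNReal.mul_inv_le_one _, ENNReal.mul_inv_le_one _, Measure.restrict_le_self]
    _ = μ.prod ν E := by simp

lemma measureReal_inter_le_cond {Ω : Type*} [MeasurableSpace Ω] (P : Measure Ω)
    [IsProbabilityMeasure P] (F Z : Set Ω) : P.real (F ∩ Z) ≤ (P[|F]).real Z := by
  refine ENNReal.toReal_mono (measure_ne_top _ _) ?_
  calc P (F ∩ Z) ≤ 1 * P.restrict F Z := by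
        rw [one_mul, Set.inter_comm]
        exact Measure.le_restrict_apply F Z
    _ ≤ (P F)⁻¹ * P.restrict F Z := by
        gcongr
        exact ENNReal.one_le_inv.mpr prob_le_one
    _ = P[|F] Z := rfl

lemma IsSRWLaw.pow_mul_le_prod (hd : 0 < d) (h : IsSRWLaw μ 0) (h' : IsSRWLaw μ' 0) {n k : ℕ}
    (hk : 8 * k ≤ n + 1) {e e' : Fin d × ℤˣ}
    (hmeet : (rayLaw μ k 0 e).prod (rayLaw μ' k 0 e') (meetEvent d) ≤ 1 / 8) :
    (2 * (d : ℝ≥0∞))⁻¹ ^ (k + k) * (1 / 8) ≤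
      μ.prod μ' (disjointEvent d n ∩ separatedEvent d n) := by
  have := h.1
  have := h'.1
  calc (2 * (d : ℝ≥0∞))⁻¹ ^ (k + k) * (1 / 8)
      ≤ μ (pathCylinder k (ray 0 e)) * μ' (pathCylinder k (ray 0 e')) *
        (rayLaw μ k 0 e).prod (rayLaw μ' k 0 e') (disjointEvent d n ∩ separatedEvent d n) := by
        rw [h.measure_ray, h'.measure_ray, ← pow_add]
        gcongr
        exact h.le_prod_rayLaw_of_le hd h' hk hmeet
    _ ≤ μ.prod μ' (disjointEvent d n ∩ separatedEvent d n) := mul_prod_cond_le _ _ _ _ _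

lemma IsSRWLaw.pow_le_prod (h : IsSRWLaw μ 0) (h' : IsSRWLaw μ' 0) (n : ℕ) (z : Fin d) :
    (2 * (d : ℝ≥0∞))⁻¹ ^ (n + 1 + (n + 1)) ≤
      μ.prod μ' (disjointEvent d n ∩ separatedEvent d n) := by
  have := h'.1
  calc (2 * (d : ℝ≥0∞))⁻¹ ^ (n + 1 + (n + 1))
      = μ.prod μ' (pathCylinder (n + 1) (ray 0 (z, 1)) ×ˢ
          pathCylinder (n + 1) (ray 0 (z, -1))) := by
        rw [Measure.prod_prod, h.measure_ray, h'.measure_ray, pow_add]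
    _ ≤ μ.prod μ' (disjointEvent d n ∩ separatedEvent d n) :=
        measure_mono (prod_pathCylinder_ray_subset n z)

lemma exists_pos_le_prod (hd : 5 ≤ d) : ∃ c : ℝ, 0 < c ∧
    ∀ (n : ℕ) (μ μ' : Measure (ℕ → V d)), IsSRWLaw μ 0 → IsSRWLaw μ' 0 →
      c ≤ (μ.prod μ').real (disjointEvent d n ∩ separatedEvent d n) := by
  have hd0 : 0 < d := by lia
  obtain ⟨k, hk⟩ := exists_prod_rayLaw_meetEvent_le hd (ε := 1 / 8) (by simp)
  have hle_one : (2 * (d : ℝ≥0∞))⁻¹ ≤ 1 :=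
    ENNReal.inv_le_one.mpr (mod_cast (by lia : 1 ≤ 2 * d))
  refine ⟨((2 * (d : ℝ≥0∞))⁻¹ ^ (16 * k) * (1 / 8)).toReal,
    ENNReal.toReal_pos (mul_ne_zero (pow_ne_zero _ stepProb_ne_zero) (by simp))
      (ENNReal.mul_ne_top (ENNReal.pow_ne_top (stepProb_ne_top hd0)) (by simp)),
    fun n μ μ' h h' => ?_⟩
  have := h.1
  have := h'.1
  refine ENNReal.toReal_mono (measure_ne_top _ _) ?_
  rcases le_total (8 * k) (n + 1) with hkn | hnk
  · refine le_trans ?_ (h.pow_mul_le_prod hd0 h' hkn (hk μ μ' h h' ⟨0, hd0⟩))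
    gcongr ?_ * _
    exact pow_le_pow_right_of_le_one' hle_one (by lia)
  · refine le_trans ?_ (h.pow_le_prod h' n ⟨0, hd0⟩)
    exact mul_le_of_le_of_le_one (pow_le_pow_right_of_le_one' hle_one (by lia)) (by simp)

/-- **Separation lemma** (Lemma 2.2).  Let `d ≥ 5`.  There is `c₁ > 0`, depending only
on `d`, such that for all `n ≥ 1`, if `S, S'` are independent simple random walks from
`0`, `T_n, T'_n` their exit times from `Q_n`,
`F_n = { S[1,T_n] ∩ S'[1,T'_n] = ∅ }` and
`Z_n = max( dist(S(T_n), S'[1,T'_n]), dist(S'(T'_n), S[0,T_n]) )`, then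
`P( Z_n ≥ n/2 | F_n ) ≥ c₁`. -/
theorem separation_lemma :
    ∀ d : ℕ, 5 ≤ d → ∃ c₁ : ℝ, 0 < c₁ ∧
      ∀ n : ℕ, 1 ≤ n →
      ∀ μ μ' : Measure (ℕ → V d), IsSRWLaw μ 0 → IsSRWLaw μ' 0 →
        c₁ ≤ (ProbabilityTheory.cond (μ.prod μ')
            { p : (ℕ → V d) × (ℕ → V d) |
                rangeSet 1 (exitTime (cube 0 n) p.1) p.1 ∩
                  rangeSet 1 (exitTime (cube 0 n) p.2) p.2 = ∅ }
            { p : (ℕ → V d) × (ℕ → V d) |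
                (n : ℝ) / 2 ≤
                  max (eudistSet (p.1 (exitTime (cube 0 n) p.1))
                        (rangeSet 1 (exitTime (cube 0 n) p.2) p.2))
                      (eudistSet (p.2 (exitTime (cube 0 n) p.2))
                        (rangeSet 0 (exitTime (cube 0 n) p.1) p.1)) }).toReal := by
  intro d hd
  obtain ⟨c, hc, hle⟩ := exists_pos_le_prod hd
  refine ⟨c, hc, fun n _ μ μ' h h' => ?_⟩
  have := h.1
  have := h'.1
  exact (hle n μ μ' h h').trans
    (measureReal_inter_le_cond (μ.prod μ') (disjointEvent d n) (separatedEvent d n))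

end USFPaper
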